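/- arXiv:math/0503033 — 4 statements merged into one kernel-verified Lean document; each statement's English description precedes it below -/
import Mathlib

section
/- For every w = (w₁,w₂,w₃,w₄) ∈ ℝ⁴ with ‖w‖ = 1 and (w₂,w₃) ≠ (0,0), there exists (q,p,z) ∈ ℝ³ with f(q,p,z) = w. In other words, the image of f is exactly S³ \ K₀. -/
open Real

/-- λ(q,p,z) = (1 + p²/4 + z²)^(−1/2) -/
noncomputable def lam (q p z : ℝ) : ℝ := (Real.sqrt (1 + p ^ 2 / 4 + z ^ 2))⁻¹

/-- f(q,p,z) = λ·(p/2·sin q − z·cos q, cos q, sin q, p/2·cos q + z·sin q) ∈ ℝ⁴ -/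
noncomputable def f (q p z : ℝ) : EuclideanSpace ℝ (Fin 4) :=
  lam q p z •
    (WithLp.equiv 2 (Fin 4 → ℝ)).symm
      ![p / 2 * Real.sin q - z * Real.cos q, Real.cos q, Real.sin q,
        p / 2 * Real.cos q + z * Real.sin q]

/-- Every point of S³ \ K₀ is in the image of f. -/
theorem f_surjective_onto_sphere_minus_K0 (w : EuclideanSpace ℝ (Fin 4))
    (hw : ‖w‖ = 1) (hK : ¬(w 1 = 0 ∧ w 2 = 0)) :
    ∃ q p z : ℝ, f q p z = w := by
  have hn : w 0 ^ 2 + w 1 ^ 2 + w 2 ^ 2 + w 3 ^ 2 = 1 := by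
    have h := EuclideanSpace.real_norm_sq_eq w
    rw [hw, Fin.sum_univ_four] at h
    linarith
  set c : ℂ := ⟨w 1, w 2⟩ with hc
  have hc0 : c ≠ 0 := by
    intro h
    exact hK ⟨congrArg Complex.re h, congrArg Complex.im h⟩
  have hr : 0 < ‖c‖ := norm_pos_iff.mpr hc0
  have h1 : ‖c‖ * Real.cos c.arg = w 1 := Complex.norm_mul_cos_arg c
  have h2 : ‖c‖ * Real.sin c.arg = w 2 := Complex.norm_mul_sin_arg c
  generalize ‖c‖ = r at *
  generalize c.arg = q at *
  have hcs := Real.sin_sq_add_cos_sq q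
  have hr2 : r ^ 2 = w 1 ^ 2 + w 2 ^ 2 := by
    rw [← h1, ← h2]
    linear_combination -(r ^ 2) * hcs
  refine ⟨q, 2 * ((w 0 * Real.sin q + w 3 * Real.cos q) / r),
    (w 3 * Real.sin q - w 0 * Real.cos q) / r, ?_⟩
  have hl : lam q (2 * ((w 0 * Real.sin q + w 3 * Real.cos q) / r))
      ((w 3 * Real.sin q - w 0 * Real.cos q) / r) = r := by
    have hs : 1 + (2 * ((w 0 * Real.sin q + w 3 * Real.cos q) / r)) ^ 2 / 4
        + ((w 3 * Real.sin q - w 0 * Real.cos q) / r) ^ 2 = (r⁻¹) ^ 2 := by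
      field_simp
      linear_combination 4 * hr2 + 4 * hn + 4 * (w 0 ^ 2 + w 3 ^ 2) * hcs
    unfold lam
    rw [hs, Real.sqrt_sq (inv_pos.mpr hr).le, inv_inv]
  unfold f
  rw [hl]
  ext i
  fin_cases i
  · simp
    field_simp
    linear_combination w 0 * hcs
  · simpa using h1
  · simpa using h2
  · simp
    field_simp
    linear_combination w 3 * hcs
end

section
/- For all (q,p,z), (q',p',z') ∈ ℝ³, one has f(q,p,z) = f(q',p',z') if and only if p = p', z = z', and q' − q is an integer multiple of 2π. In particular f descends to an injective map on (ℝ/2πℤ) × ℝ². -/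
open Real

/-- f(q,p,z) = f(q',p',z') iff p = p', z = z' and q' − q ∈ 2πℤ. -/
theorem f_eq_iff (q p z q' p' z' : ℝ) :
    f q p z = f q' p' z' ↔
      p = p' ∧ z = z' ∧ ∃ k : ℤ, q' - q = 2 * Real.pi * k := by
  constructor
  · intro h
    have h0 := congrArg (fun v : EuclideanSpace ℝ (Fin 4) => v 0) h
    have h1 := congrArg (fun v : EuclideanSpace ℝ (Fin 4) => v 1) h
    have h2 := congrArg (fun v : EuclideanSpace ℝ (Fin 4) => v 2) h
    have h3 := congrArg (fun v : EuclideanSpace ℝ (Fin 4) => v 3) h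
    simp [f] at h0 h1 h2 h3
    have ha : 0 < lam q p z := by unfold lam; positivity
    have hb : 0 < lam q' p' z' := by unfold lam; positivity
    generalize lam q p z = a at *
    generalize lam q' p' z' = b at *
    have e := Real.sin_sq_add_cos_sq q
    have e' := Real.sin_sq_add_cos_sq q'
    have hab : a = b := by
      have hsq : a ^ 2 = b ^ 2 := by
        calc a ^ 2 = (a * sin q) ^ 2 + (a * cos q) ^ 2 := by
              linear_combination (-a ^ 2) * e
          _ = b ^ 2 := by rw [h1, h2]; linear_combination b ^ 2 * e'
      exact (pow_left_inj₀ ha.le hb.le two_ne_zero).1 hsq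
    subst hab
    have g0 := mul_left_cancel₀ ha.ne' h0
    have g1 := mul_left_cancel₀ ha.ne' h1
    have g2 := mul_left_cancel₀ ha.ne' h2
    have g3 := mul_left_cancel₀ ha.ne' h3
    rw [← g1, ← g2] at g0 g3
    refine ⟨?_, ?_, ?_⟩
    · linear_combination 2 * sin q * g0 + 2 * cos q * g3 - (p - p') * e
    · linear_combination (-cos q) * g0 + sin q * g3 - (z - z') * e
    · have hc : cos (q' - q) = 1 := by
        rw [Real.cos_sub, ← g1, ← g2]; linear_combination e
      obtain ⟨k, hk⟩ := (Real.cos_eq_one_iff _).1 hc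
      exact ⟨k, by rw [← hk]; ring⟩
  · rintro ⟨rfl, rfl, k, hk⟩
    have hq : q' = q + k * (2 * π) := by linear_combination hk
    subst hq
    simp [f, lam, Real.sin_add_int_mul_two_pi, Real.cos_add_int_mul_two_pi]
end

section
/- For every (q,x,y) ∈ ℝ³, one has f(q, −2x·sin(2q) − 2y·cos(2q), x·cos(2q) − y·sin(2q)) = g(q,x,y). That is, in the coordinates (q,x,y) defined by p = −2x·sin(2q) − 2y·cos(2q) and z = x·cos(2q) − y·sin(2q), the map f takes the form g. -/
open Real

/-- g(q,x,y) = (1+x²+y²)^(−1/2)·(−x·cos q + y·sin q, cos q, sin q, −x·sin q − y·cos q). -/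
noncomputable def g (q x y : ℝ) : EuclideanSpace ℝ (Fin 4) :=
  (Real.sqrt (1 + x ^ 2 + y ^ 2))⁻¹ •
    (WithLp.equiv 2 (Fin 4 → ℝ)).symm
      ![-x * Real.cos q + y * Real.sin q, Real.cos q, Real.sin q,
        -x * Real.sin q - y * Real.cos q]

/-- In the coordinates (q,x,y) with p = −2x·sin(2q) − 2y·cos(2q) and
z = x·cos(2q) − y·sin(2q), the map f takes the form g. -/
theorem f_in_qxy_coordinates (q x y : ℝ) :
    f q (-2 * x * Real.sin (2 * q) - 2 * y * Real.cos (2 * q))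
      (x * Real.cos (2 * q) - y * Real.sin (2 * q)) = g q x y := by
  have h := Real.sin_sq_add_cos_sq (2 * q)
  have hs : Real.sin q = Real.sin (2 * q) * Real.cos q - Real.cos (2 * q) * Real.sin q := by
    rw [← Real.sin_sub]; congr 1; ring
  have hc : Real.cos q = Real.cos (2 * q) * Real.cos q + Real.sin (2 * q) * Real.sin q := by
    rw [← Real.cos_sub]; congr 1; ring
  have h0 : 1 + (-2 * x * Real.sin (2 * q) - 2 * y * Real.cos (2 * q)) ^ 2 / 4
      + (x * Real.cos (2 * q) - y * Real.sin (2 * q)) ^ 2 = 1 + x ^ 2 + y ^ 2 := by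
    linear_combination (x ^ 2 + y ^ 2) * h
  have h1 : (-2 * x * Real.sin (2 * q) - 2 * y * Real.cos (2 * q)) / 2 * Real.sin q
      - (x * Real.cos (2 * q) - y * Real.sin (2 * q)) * Real.cos q
      = -x * Real.cos q + y * Real.sin q := by
    linear_combination x * hc - y * hs
  have h2 : (-2 * x * Real.sin (2 * q) - 2 * y * Real.cos (2 * q)) / 2 * Real.cos q
      + (x * Real.cos (2 * q) - y * Real.sin (2 * q)) * Real.sin q
      = -x * Real.sin q - y * Real.cos q := by
    linear_combination x * hs + y * hc
  unfold f g lam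
  rw [h0, h1, h2]
end

section
/- Define Φ : ℝ³ → ℝ³ by Φ(q,x,y) = (q, −2x·sin(2q) − 2y·cos(2q), x·cos(2q) − y·sin(2q)). Then for every (q,x,y) ∈ ℝ³ and every (a,b,c) ∈ ℝ³, writing (a',b',c') = DΦ(q,x,y)(a,b,c) for the Fréchet derivative of Φ and P = −2x·sin(2q) − 2y·cos(2q), one has c' − P·a' = cos(2q)·b − sin(2q)·c. That is, under the coordinate change p = −2x·sin(2q) − 2y·cos(2q), z = x·cos(2q) − y·sin(2q), the 1-form dz − p dq pulls back to cos(2q) dx − sin(2q) dy. -/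
open Real

/-- The coordinate change Φ(q,x,y) = (q, −2x·sin(2q) − 2y·cos(2q), x·cos(2q) − y·sin(2q)). -/
noncomputable def Phi (w : ℝ × ℝ × ℝ) : ℝ × ℝ × ℝ :=
  (w.1,
   -2 * w.2.1 * Real.sin (2 * w.1) - 2 * w.2.2 * Real.cos (2 * w.1),
   w.2.1 * Real.cos (2 * w.1) - w.2.2 * Real.sin (2 * w.1))

/-- Under the coordinate change Φ, the 1-form dz − p dq pulls back to
cos(2q) dx − sin(2q) dy: with (a',b',c') = DΦ(q,x,y)(a,b,c) and
P = −2x·sin(2q) − 2y·cos(2q), one has c' − P·a' = cos(2q)·b − sin(2q)·c. -/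
theorem Phi_pullback_contact_form (q x y a b c : ℝ) :
    (fderiv ℝ Phi (q, x, y) (a, b, c)).2.2 -
      (-2 * x * Real.sin (2 * q) - 2 * y * Real.cos (2 * q)) *
        (fderiv ℝ Phi (q, x, y) (a, b, c)).1 =
      Real.cos (2 * q) * b - Real.sin (2 * q) * c := by
  have h1 : HasFDerivAt (fun w : ℝ × ℝ × ℝ => w.1) _ (q, x, y) :=
    hasFDerivAt_fst (𝕜 := ℝ) (E := ℝ) (F := ℝ × ℝ) (p := (q, x, y))
  have h2 : HasFDerivAt (fun w : ℝ × ℝ × ℝ => w.2.1) _ (q, x, y) :=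
    (hasFDerivAt_snd (𝕜 := ℝ) (E := ℝ) (F := ℝ × ℝ) (p := (q, x, y))).fst
  have h3 : HasFDerivAt (fun w : ℝ × ℝ × ℝ => w.2.2) _ (q, x, y) :=
    (hasFDerivAt_snd (𝕜 := ℝ) (E := ℝ) (F := ℝ × ℝ) (p := (q, x, y))).snd
  have hs := (h1.const_mul 2).sin
  have hc := (h1.const_mul 2).cos
  have h : HasFDerivAt Phi _ (q, x, y) :=
    h1.prodMk ((((h2.const_mul (-2)).mul hs).sub ((h3.const_mul 2).mul hc)).prodMk
      ((h2.mul hc).sub (h3.mul hs)))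
  rw [h.fderiv]
  simp
  ring
end
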